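/- Let p be a prime, k a positive integer, and let A and B be nonempty subsets of the group (ℤ/(p))^k. Then |A + B| ≥ β_p(|A|, |B|), where β_p(r, s) is the smallest non-negative integer n such that p divides the binomial coefficient C(n, m) for all integers m in the range n - r < m < s. -/

import Mathlib

open Pointwise

/-- `betaP p r s` is the smallest non-negative integer `n` such that `p`
divides the binomial coefficient `C(n, m)` for all integers `m` in the range
`n - r < m < s`. -/
noncomputable def betaP (p r s : ℕ) : ℕ :=
  sInf {n : ℕ | ∀ m : ℕ, (n : ℤ) - (r : ℤ) < (m : ℤ) → m < s → p ∣ n.choose m}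

/-!
The vector space embeds additively into a polynomial ring over `ZMod p`, as the linear forms, so
`A` and `B` may be taken to lie in a domain `R` of characteristic `p`. Let `P` be the monic
polynomial whose roots are the points of `A + B`, and let `i + j = |A + B|` with `i < |A|` and
`j < |B|`. Then `P (X + Y)` vanishes on `A × B`, while its coefficient at `X ^ i * Y ^ j` is the
binomial coefficient `C(i + j, i)` and its total degree is `i + j`. By the combinatorial
Nullstellensatz this coefficient is zero in `R`, that is, divisible by `p`.
-/

open Finset

section SumSubstitution

variable {R : Type*} [CommSemiring R]

lemma coeff_aeval_X_add_X (P : Polynomial R) (d : Fin 2 →₀ ℕ) :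
    (P.aeval (.X 0 + .X 1 : MvPolynomial (Fin 2) R)).coeff d =
      P.coeff d.degree * d.degree.choose (d 0) := by
  have coeff_pow (n : ℕ) : ((.X 0 + .X 1 : MvPolynomial (Fin 2) R) ^ n).coeff d =
      if d.degree = n then (n.choose (d 0) : R) else 0 := by
    simp only [MvPolynomial.coeff_add_pow, HasAntidiagonal.mem_antidiagonal,
      Finsupp.degree_eq_sum, Fin.sum_univ_two, Nat.cast_ite, Nat.cast_zero]
  simp only [Polynomial.aeval_def, Polynomial.eval₂_eq_sum, Polynomial.sum_def,
    MvPolynomial.coeff_sum, MvPolynomial.algebraMap_eq, MvPolynomial.coeff_C_mul, coeff_pow,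
    mul_ite, mul_zero, sum_ite_eq]
  simp +contextual

lemma totalDegree_aeval_X_add_X_le (P : Polynomial R) :
    (P.aeval (.X 0 + .X 1 : MvPolynomial (Fin 2) R)).totalDegree ≤ P.natDegree := by
  refine Finset.sup_le fun d hd ↦ Polynomial.le_natDegree_of_ne_zero (n := d.degree) ?_
  rw [MvPolynomial.mem_support_iff, coeff_aeval_X_add_X] at hd
  exact left_ne_zero_of_mul hd

end SumSubstitution

section Domain

variable {R : Type*} [CommRing R] [IsDomain R]

lemma exists_eval_add_ne_zero {P : Polynomial R} (hP : P ≠ 0) {i j : ℕ}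
    (hdeg : P.natDegree = i + j) (hchoose : ((i + j).choose i : R) ≠ 0) {A B : Finset R}
    (hi : i < #A) (hj : j < #B) : ∃ a ∈ A, ∃ b ∈ B, P.eval (a + b) ≠ 0 := by
  let Q : MvPolynomial (Fin 2) R := P.aeval (.X 0 + .X 1)
  let d : Fin 2 →₀ ℕ := Finsupp.equivFunOnFinite.symm ![i, j]
  have degree_d : d.degree = i + j := by simp [d, Finsupp.degree_eq_sum]
  have coeff_ne_zero : Q.coeff d ≠ 0 := by
    rw [coeff_aeval_X_add_X, degree_d, ← hdeg]
    exact mul_ne_zero (Polynomial.leadingCoeff_ne_zero.mpr hP) (hdeg ▸ hchoose)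
  have totalDegree_Q : Q.totalDegree = d.degree :=
    le_antisymm ((totalDegree_aeval_X_add_X_le P).trans_eq (hdeg.trans degree_d.symm))
      (MvPolynomial.le_totalDegree (MvPolynomial.mem_support_iff.mpr coeff_ne_zero))
  obtain ⟨x, hx, eval_ne_zero⟩ :=
    MvPolynomial.combinatorial_nullstellensatz_exists_eval_nonzero Q d coeff_ne_zero totalDegree_Q
      ![A, B] (Fin.forall_fin_two.mpr ⟨hi, hj⟩)
  have eval_Q : Q.eval x = P.eval (x 0 + x 1) := by
    have eval_comp_C : (MvPolynomial.eval x).comp MvPolynomial.C = RingHom.id R := by ext; simp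
    simp [Q, Polynomial.aeval_def, Polynomial.hom_eval₂, eval_comp_C, MvPolynomial.algebraMap_eq]
  exact ⟨x 0, hx 0, x 1, hx 1, eval_Q ▸ eval_ne_zero⟩

variable [DecidableEq R]

lemma choose_card_add_eq_zero {A B : Finset R} {i j : ℕ} (hij : #(A + B) = i + j)
    (hi : i < #A) (hj : j < #B) : ((i + j).choose i : R) = 0 := by
  by_contra hchoose
  obtain ⟨a, ha, b, hb, eval_ne_zero⟩ := exists_eval_add_ne_zero
    (P := Lagrange.nodal (A + B) id) Lagrange.nodal_ne_zero (by rw [Lagrange.natDegree_nodal, hij])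
    hchoose hi hj
  exact eval_ne_zero (Lagrange.eval_nodal_at_node (v := id) (add_mem_add ha hb))

lemma betaP_le_card_add (p : ℕ) [CharP R p] (A B : Finset R) :
    betaP p #A #B ≤ #(A + B) := by
  refine Nat.sInf_le fun m hmA hmB ↦ ?_
  obtain hm | hm := lt_or_ge #(A + B) m
  · simp [Nat.choose_eq_zero_of_lt hm]
  obtain ⟨i, hij⟩ := Nat.exists_eq_add_of_le' hm
  rw [hij, ← Nat.choose_symm_add, ← CharP.cast_eq_zero_iff R p]
  exact choose_card_add_eq_zero hij (by lia) hmB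

end Domain

lemma exists_injective_linearMap_mvPolynomial {ι R M : Type*} [CommSemiring R] [AddCommMonoid M]
    [Module R M] (b : Module.Basis ι R M) :
    ∃ f : M →ₗ[R] MvPolynomial ι R, Function.Injective f :=
  ⟨Finsupp.linearCombination R MvPolynomial.X ∘ₗ b.repr,
    (MvPolynomial.linearIndependent_X ι R).finsuppLinearCombination_injective.comp b.repr.injective⟩

theorem cauchy_davenport_vector_space_general {p : ℕ} (hp : p.Prime) {V : Type*} [AddCommGroup V]
    [Module (ZMod p) V] [DecidableEq V] (A B : Finset V) :
    betaP p #A #B ≤ #(A + B) := by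
  classical
  have : Fact p.Prime := ⟨hp⟩
  obtain ⟨f, hf⟩ :=
    exists_injective_linearMap_mvPolynomial (Module.Basis.ofVectorSpace (ZMod p) V)
  simpa only [← image_add, card_image_of_injective _ hf] using
    betaP_le_card_add p (A.image f) (B.image f)

/-- Cauchy–Davenport type bound for `(ℤ/(p))^k`. -/
theorem cauchy_davenport_vector_space (p : ℕ) (hp : p.Prime) (k : ℕ)
    (hk : 0 < k) (A B : Finset (Fin k → ZMod p))
    (hA : A.Nonempty) (hB : B.Nonempty) :
    betaP p A.card B.card ≤ (A + B).card :=
  cauchy_davenport_vector_space_general hp A B
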